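/- Consider N devices with local loss functions L_j : ℝ^d → ℝ (j = 1,…,N), each convex, ρ-Lipschitz, and β-smooth (i.e., its gradient is β-Lipschitz), nonnegative weights a_j summing to 1, global loss L(w) = Σ_j a_j L_j(w), and a global minimizer w* of L. Fix a step size η with 0 < η ≤ 1/β and an aggregation period τ ∈ ℕ, τ ≥ 1. Define federated iterates: all devices start from a common point w_j(0) = w₀; for each step t, if t+1 is not a multiple of τ then w_j(t+1) = w_j(t) − η∇L_j(w_j(t)), and if t+1 = kτ then every device's parameter is reset to the aggregate w(k) = Σ_l a_l (w_l(t) − η∇L_l(w_l(t))). Define auxiliary centralized iterates: for each k ≥ 1, v_k((k−1)τ) equals the common synchronized value w((k−1)) (with w(0) = w₀), and v_k(t+1) = v_k(t) − η∇L(v_k(t)) for (k−1)τ ≤ t < kτ. Let δ_j be constants with ‖∇L_j(w) − ∇L(w)‖ ≤ δ_j for all w, let δ = Σ_j a_j δ_j, let g_j(x) = (δ_j/β)((ηβ+1)^x − 1), and h(x) = (δ/β)((ηβ+1)^x − 1) − ηδx. Fix a device i, a time t ≥ 1, set K = ⌊t/τ⌋, ω = min_{1≤k≤K+1} ‖v_k((k−1)τ)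 − w*‖^{−2} (each v_k((k−1)τ) ≠ w*), and let ε₀ be the unique positive root of the quadratic t·ω·η·(1 − βη/2)·ε² − ε − ρ(K·h(τ) + g_i(t − Kτ)) = 0, namely ε₀ = 1/(tωη(2−βη)) + √( 1/(t²ω²η²(2−βη)²) + ρ(K·h(τ) + g_i(t−Kτ))/(tωη(1 − βη/2)) ). Assume that L(v_k(kτ)) − L(w*) ≥ ε₀ for every k = 1,…,K and that the sequence k ↦ L(v_k(kτ)) is non-increasing. Then the local loss of device i satisfies L(w_i(t)) − L(w*) ≤ ε₀ + ρ·g_i(t − Kτ). -/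

import Mathlib

/-! Within one aggregation period, a discrete Grönwall argument bounds the distance from each device
to the centralized iterate by `g`, and averaging the devices improves this to `h` at the end of the
period. So up to a jump of at most `ρ h(τ)` in the loss at every aggregation, the federated method
follows gradient descent on the global loss. For gradient descent the reciprocal of the
suboptimality gap grows by at least `ω η (1 - β η / 2)` per step, while a jump between two gaps that
are both at least `ε₀` lowers the reciprocal by at most `ρ h(τ) / ε₀²`. If the gap still exceeded
`ε₀` at time `t`, summing these changes would contradict the quadratic equation defining `ε₀`. -/

open scoped Gradient

section Smooth

variable {E : Type*} [NormedAddCommGroup E] [NormedSpace ℝ E]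

/-- The function `f` is `β`-smooth: it is differentiable and its derivative, measured in the dual
norm, is `β`-Lipschitz. In a Hilbert space this is Lipschitz continuity of the gradient; see
`isSmooth_of_norm_gradient_sub_le`. -/
structure IsSmooth (β : ℝ) (f : E → ℝ) : Prop where
  differentiable : Differentiable ℝ f
  norm_fderiv_sub_le : ∀ x y, ‖fderiv ℝ f x - fderiv ℝ f y‖ ≤ β * ‖x - y‖

lemma add_fderiv_sub_le_of_convexOn {s : Set E} {f : E → ℝ} (hc : ConvexOn ℝ s f) {x y : E}
    (hx : x ∈ s) (hy : y ∈ s) (hf : DifferentiableAt ℝ f x) :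
    f x + fderiv ℝ f x (y - x) ≤ f y := by
  have hline : HasDerivAt (f ∘ AffineMap.lineMap x y) (fderiv ℝ f x (y - x)) (0 : ℝ) :=
    hf.hasFDerivAt.comp_hasDerivAt_of_eq 0 AffineMap.hasDerivAt_lineMap (by simp)
  have hslope := (hc.comp_affineMap (AffineMap.lineMap x y)).le_slope_of_hasDerivAt
    (x := 0) (y := 1) (by simpa using hx) (by simpa using hy) one_pos hline
  simp only [slope_def_field, Function.comp_apply, AffineMap.lineMap_apply_zero,
    AffineMap.lineMap_apply_one, sub_zero, div_one] at hslope
  linarith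

lemma IsSmooth.le_add_fderiv_add_sq {β : ℝ} {f : E → ℝ} (hf : IsSmooth β f) (x y : E) :
    f (x + y) ≤ f x + fderiv ℝ f x y + β / 2 * ‖y‖ ^ 2 := by
  have hline (s : ℝ) : HasDerivAt (fun s : ℝ => f (x + s • y)) (fderiv ℝ f (x + s • y) y) s := by
    refine (hf.differentiable _).hasFDerivAt.comp_hasDerivAt s ?_
    simpa using ((hasDerivAt_id s).smul_const y).const_add x
  have hquad (s : ℝ) : HasDerivAt (fun s : ℝ => f x + s * fderiv ℝ f x y + β / 2 * ‖y‖ ^ 2 * s ^ 2)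
      (fderiv ℝ f x y + β * ‖y‖ ^ 2 * s) s := by
    refine ((((hasDerivAt_id s).mul_const (fderiv ℝ f x y)).const_add (f x)).add
      (((hasDerivAt_id s).pow 2).const_mul (β / 2 * ‖y‖ ^ 2))).congr_deriv ?_
    simp only [id_eq]
    ring
  have hderiv (s : ℝ) (hs : 0 ≤ s) :
      fderiv ℝ f (x + s • y) y ≤ fderiv ℝ f x y + β * ‖y‖ ^ 2 * s := by
    suffices (fderiv ℝ f (x + s • y) - fderiv ℝ f x) y ≤ β * ‖y‖ ^ 2 * s by
      rw [sub_apply] at this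
      linarith
    calc (fderiv ℝ f (x + s • y) - fderiv ℝ f x) y
        ≤ ‖fderiv ℝ f (x + s • y) - fderiv ℝ f x‖ * ‖y‖ :=
          (Real.le_norm_self _).trans (ContinuousLinearMap.le_opNorm _ _)
      _ ≤ β * ‖x + s • y - x‖ * ‖y‖ := by gcongr; exact hf.norm_fderiv_sub_le _ _
      _ = β * ‖y‖ ^ 2 * s := by
        rw [add_sub_cancel_left, norm_smul, Real.norm_of_nonneg hs]
        ring
  have hle := image_le_of_deriv_right_le_deriv_boundary
    (fun s _ => (hline s).continuousAt.continuousWithinAt) (fun s _ => (hline s).hasDerivWithinAt)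
    (by simp) (fun s _ => (hquad s).continuousAt.continuousWithinAt)
    (fun s _ => (hquad s).hasDerivWithinAt) (fun s hs => hderiv s hs.1)
    (Set.right_mem_Icc.2 (zero_le_one' ℝ))
  simpa using hle

end Smooth

section WeightedSum

variable {ι E : Type*} {t : Finset ι} {a : ι → ℝ} [NormedAddCommGroup E] {L : ι → E → ℝ}

lemma convexOn_weighted_sum [NormedSpace ℝ E] {s : Set E} (hs : Convex ℝ s)
    (ha : ∀ j ∈ t, 0 ≤ a j) (hL : ∀ j ∈ t, ConvexOn ℝ s (L j)) :
    ConvexOn ℝ s (fun x => ∑ j ∈ t, a j * L j x) := by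
  have hsum : ConvexOn ℝ s (∑ j ∈ t, fun x => a j * L j x) :=
    Finset.sum_induction _ (ConvexOn ℝ s) (fun _ _ => ConvexOn.add) (convexOn_const 0 hs)
      fun j hj => (hL j hj).smul (ha j hj)
  simpa only [Finset.sum_fn] using hsum

lemma abs_weighted_sum_sub_le (ha : ∀ j ∈ t, 0 ≤ a j) (hasum : ∑ j ∈ t, a j = 1) {ρ : ℝ} {x y : E}
    (hL : ∀ j ∈ t, |L j x - L j y| ≤ ρ * ‖x - y‖) :
    |∑ j ∈ t, a j * L j x - ∑ j ∈ t, a j * L j y| ≤ ρ * ‖x - y‖ := by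
  calc |∑ j ∈ t, a j * L j x - ∑ j ∈ t, a j * L j y|
      = |∑ j ∈ t, a j * (L j x - L j y)| := by simp only [mul_sub, Finset.sum_sub_distrib]
    _ ≤ ∑ j ∈ t, a j * (ρ * ‖x - y‖) := by
      refine (Finset.abs_sum_le_sum_abs _ _).trans (Finset.sum_le_sum fun j hj => ?_)
      rw [abs_mul, abs_of_nonneg (ha j hj)]
      exact mul_le_mul_of_nonneg_left (hL j hj) (ha j hj)
    _ = ρ * ‖x - y‖ := by rw [← Finset.sum_mul, hasum, one_mul]

lemma hasFDerivAt_weighted_sum [NormedSpace ℝ E] {x : E}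
    (hL : ∀ j ∈ t, DifferentiableAt ℝ (L j) x) :
    HasFDerivAt (fun x => ∑ j ∈ t, a j * L j x) (∑ j ∈ t, a j • fderiv ℝ (L j) x) x :=
  HasFDerivAt.fun_sum fun j hj => (hL j hj).hasFDerivAt.const_mul (a j)

lemma isSmooth_weighted_sum [NormedSpace ℝ E] (ha : ∀ j ∈ t, 0 ≤ a j) (hasum : ∑ j ∈ t, a j = 1)
    {β : ℝ} (hL : ∀ j ∈ t, IsSmooth β (L j)) : IsSmooth β (fun x => ∑ j ∈ t, a j * L j x) := by
  have hderiv (x : E) := hasFDerivAt_weighted_sum (a := a) fun j hj => (hL j hj).differentiable x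
  refine ⟨fun x => (hderiv x).differentiableAt, fun x y => ?_⟩
  rw [(hderiv x).fderiv, (hderiv y).fderiv]
  calc ‖∑ j ∈ t, a j • fderiv ℝ (L j) x - ∑ j ∈ t, a j • fderiv ℝ (L j) y‖
      = ‖∑ j ∈ t, a j • (fderiv ℝ (L j) x - fderiv ℝ (L j) y)‖ := by
        simp only [smul_sub, Finset.sum_sub_distrib]
    _ ≤ ∑ j ∈ t, a j * (β * ‖x - y‖) := by
      refine norm_sum_le_of_le _ fun j hj => ?_
      rw [norm_smul, Real.norm_of_nonneg (ha j hj)]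
      exact mul_le_mul_of_nonneg_left ((hL j hj).norm_fderiv_sub_le x y) (ha j hj)
    _ = β * ‖x - y‖ := by rw [← Finset.sum_mul, hasum, one_mul]

lemma gradient_weighted_sum [InnerProductSpace ℝ E] [CompleteSpace E] {x : E}
    (hL : ∀ j ∈ t, DifferentiableAt ℝ (L j) x) :
    ∇ (fun x => ∑ j ∈ t, a j * L j x) x = ∑ j ∈ t, a j • ∇ (L j) x := by
  refine HasGradientAt.gradient (hasGradientAt_iff_hasFDerivAt.2 ?_)
  simpa only [map_sum, map_smul, toDual_gradient] using hasFDerivAt_weighted_sum hL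

end WeightedSum

section DescentRun

variable {E : Type*} [NormedAddCommGroup E] [NormedSpace ℝ E]

/-- The first `n` steps of the sequence `x` are steps of size `η` against the vector field `F`. For
`F = ∇ f` this is gradient descent on `f`. Values of `x` beyond `n` are unconstrained. -/
def IsDescentRun (η : ℝ) (F : E → E) (x : ℕ → E) (n : ℕ) : Prop :=
  ∀ m < n, x (m + 1) = x m - η • F (x m)

lemma IsDescentRun.mono {η : ℝ} {F : E → E} {x : ℕ → E} {m n : ℕ} (hx : IsDescentRun η F x n)
    (hmn : m ≤ n) : IsDescentRun η F x m :=
  fun p hp => hx p (hp.trans_le hmn)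

/-- The bound `g` of the paper on the distance, after `n` steps of size `η`, between two runs that
descend along vector fields at distance at most `δ`, one of which is `β`-Lipschitz. -/
noncomputable def driftBound (β η δ : ℝ) (n : ℕ) : ℝ :=
  δ / β * ((η * β + 1) ^ n - 1)

/-- The bound `h` of the paper on the distance between the average of the local runs and the
centralized run after `n` steps, where `δ` is the average gradient divergence. -/
noncomputable def averageDriftBound (β η δ : ℝ) (n : ℕ) : ℝ :=
  δ / β * ((η * β + 1) ^ n - 1) - η * δ * n

variable {β η δ : ℝ}

@[simp]
lemma driftBound_zero : driftBound β η δ 0 = 0 := by simp [driftBound]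

lemma driftBound_succ (hβ : β ≠ 0) (n : ℕ) :
    driftBound β η δ (n + 1) = (η * β + 1) * driftBound β η δ n + η * δ := by
  simp only [driftBound]
  field

lemma driftBound_nonneg (hβ : 0 < β) (hη : 0 ≤ η) (hδ : 0 ≤ δ) (n : ℕ) :
    0 ≤ driftBound β η δ n := by
  have hpow : 1 ≤ (η * β + 1) ^ n := one_le_pow₀ (le_add_of_nonneg_left (by positivity))
  exact mul_nonneg (by positivity) (sub_nonneg.2 hpow)

lemma sum_mul_driftBound {ι : Type*} (t : Finset ι) (a δ : ι → ℝ) (n : ℕ) :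
    ∑ j ∈ t, a j * driftBound β η (δ j) n = driftBound β η (∑ j ∈ t, a j * δ j) n := by
  simp only [driftBound, Finset.sum_div, Finset.sum_mul, mul_div_assoc, mul_assoc]

@[simp]
lemma averageDriftBound_zero : averageDriftBound β η δ 0 = 0 := by simp [averageDriftBound]

lemma averageDriftBound_succ (hβ : β ≠ 0) (n : ℕ) :
    averageDriftBound β η δ (n + 1)
      = averageDriftBound β η δ n + η * β * driftBound β η δ n := by
  simp only [averageDriftBound, driftBound]
  push_cast
  field

lemma averageDriftBound_nonneg (hβ : 0 < β) (hη : 0 ≤ η) (hδ : 0 ≤ δ) (n : ℕ) :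
    0 ≤ averageDriftBound β η δ n := by
  induction n with
  | zero => simp
  | succ n ih =>
    rw [averageDriftBound_succ hβ.ne']
    have := driftBound_nonneg hβ hη hδ n
    positivity

lemma IsDescentRun.norm_sub_le_driftBound (hβ : 0 < β) (hη : 0 ≤ η) {F G : E → E}
    (hF : ∀ x y, ‖F x - F y‖ ≤ β * ‖x - y‖) (hFG : ∀ x, ‖F x - G x‖ ≤ δ) {x y : ℕ → E}
    (h0 : x 0 = y 0) {n : ℕ} (hx : IsDescentRun η F x n) (hy : IsDescentRun η G y n) :
    ‖x n - y n‖ ≤ driftBound β η δ n := by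
  induction n with
  | zero => simp [h0]
  | succ n ih =>
    have ih := ih (hx.mono n.le_succ) (hy.mono n.le_succ)
    have hfield : ‖F (x n) - G (y n)‖ ≤ β * ‖x n - y n‖ + δ :=
      (norm_sub_le_norm_sub_add_norm_sub _ (F (y n)) _).trans (add_le_add (hF _ _) (hFG _))
    calc ‖x (n + 1) - y (n + 1)‖
        = ‖(x n - y n) - η • (F (x n) - G (y n))‖ := by
          rw [hx n n.lt_succ_self, hy n n.lt_succ_self]
          congr 1
          module
      _ ≤ ‖x n - y n‖ + η * ‖F (x n) - G (y n)‖ :=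
          (norm_sub_le _ _).trans_eq (by rw [norm_smul, Real.norm_of_nonneg hη])
      _ ≤ ‖x n - y n‖ + η * (β * ‖x n - y n‖ + δ) := by gcongr
      _ = (η * β + 1) * ‖x n - y n‖ + η * δ := by ring
      _ ≤ (η * β + 1) * driftBound β η δ n + η * δ := by gcongr
      _ = driftBound β η δ (n + 1) := (driftBound_succ hβ.ne' n).symm

end DescentRun

section FederatedRun

variable {ι E : Type*} [Fintype ι] [NormedAddCommGroup E] [NormedSpace ℝ E]

/-- Federated descent of step size `η`: from a common starting point, device `j` follows its own
vector field `F j`, and at every multiple of `τ` all devices are reset to their `a`-weighted sum. -/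
structure IsFederatedRun (η : ℝ) (τ : ℕ) (a : ι → ℝ) (F : ι → E → E) (w : ι → ℕ → E) :
    Prop where
  zero_eq_zero : ∀ i j, w i 0 = w j 0
  local_step : ∀ j s, ¬ τ ∣ s + 1 → w j (s + 1) = w j s - η • F j (w j s)
  aggregate_step : ∀ j s, τ ∣ s + 1 → w j (s + 1) = ∑ l, a l • (w l s - η • F l (w l s))

namespace IsFederatedRun

variable {η : ℝ} {τ : ℕ} {a : ι → ℝ} {F : ι → E → E} {w : ι → ℕ → E}

lemma eq_of_dvd (hw : IsFederatedRun η τ a F w) {s : ℕ} (hs : τ ∣ s) (i j : ι) :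
    w i s = w j s := by
  cases s with
  | zero => exact hw.zero_eq_zero i j
  | succ s => rw [hw.aggregate_step i s hs, hw.aggregate_step j s hs]

lemma sum_smul_eq_of_dvd (hw : IsFederatedRun η τ a F w) (hasum : ∑ j, a j = 1) {s : ℕ}
    (hs : τ ∣ s) (i : ι) : ∑ j, a j • w j s = w i s := by
  simp only [hw.eq_of_dvd hs _ i, ← Finset.sum_smul, hasum, one_smul]

lemma sum_smul_succ (hw : IsFederatedRun η τ a F w) (hasum : ∑ j, a j = 1) (s : ℕ) :
    ∑ j, a j • w j (s + 1) = ∑ j, a j • (w j s - η • F j (w j s)) := by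
  by_cases hs : τ ∣ s + 1
  · simp only [hw.aggregate_step _ s hs, ← Finset.sum_smul, hasum, one_smul]
  · simp only [hw.local_step _ s hs]

lemma isDescentRun (hw : IsFederatedRun η τ a F w) (k : ℕ) (j : ι) {m : ℕ} (hm : m < τ) :
    IsDescentRun η (F j) (fun p => w j (k * τ + p)) m := by
  refine fun p hp => hw.local_step j (k * τ + p) fun hdvd => ?_
  rw [add_assoc, Nat.dvd_add_right (Nat.dvd_mul_left τ k)] at hdvd
  exact absurd (Nat.le_of_dvd p.succ_pos hdvd) (by omega)

variable {β : ℝ} {δ : ι → ℝ} {G : E → E} {y : ℕ → E} {k : ℕ}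

lemma norm_sub_le_driftBound (hw : IsFederatedRun η τ a F w) (hβ : 0 < β) (hη : 0 ≤ η) {j : ι}
    (hF : ∀ x y, ‖F j x - F j y‖ ≤ β * ‖x - y‖) (hFG : ∀ x, ‖F j x - G x‖ ≤ δ j)
    (h0 : w j (k * τ) = y 0) (hy : IsDescentRun η G y τ) {m : ℕ} (hm : m < τ) :
    ‖w j (k * τ + m) - y m‖ ≤ driftBound β η (δ j) m :=
  (hw.isDescentRun k j hm).norm_sub_le_driftBound hβ hη hF hFG h0 (hy.mono hm.le)

lemma norm_sum_smul_sub_le_averageDriftBound (hw : IsFederatedRun η τ a F w)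
    (ha : ∀ j, 0 ≤ a j) (hasum : ∑ j, a j = 1) (hβ : 0 < β) (hη : 0 ≤ η)
    (hF : ∀ j x y, ‖F j x - F j y‖ ≤ β * ‖x - y‖) (hFG : ∀ j x, ‖F j x - G x‖ ≤ δ j)
    (hG : ∀ x, G x = ∑ j, a j • F j x) (h0 : ∀ j, w j (k * τ) = y 0)
    (hy : IsDescentRun η G y τ) {m : ℕ} (hm : m ≤ τ) :
    ‖∑ j, a j • w j (k * τ + m) - y m‖ ≤ averageDriftBound β η (∑ j, a j * δ j) m := by
  induction m with
  | zero => simp [h0, ← Finset.sum_smul, hasum]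
  | succ m ih =>
    have hfield : ‖∑ j, a j • (F j (w j (k * τ + m)) - F j (y m))‖
        ≤ β * driftBound β η (∑ j, a j * δ j) m := by
      rw [← sum_mul_driftBound, Finset.mul_sum]
      refine norm_sum_le_of_le _ fun j _ => ?_
      have hdrift := hw.norm_sub_le_driftBound hβ hη (hF j) (hFG j) (h0 j) hy hm
      rw [norm_smul, Real.norm_of_nonneg (ha j), mul_left_comm]
      exact mul_le_mul_of_nonneg_left ((hF j _ _).trans (by gcongr)) (ha j)
    calc ‖∑ j, a j • w j (k * τ + m + 1) - y (m + 1)‖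
        = ‖(∑ j, a j • w j (k * τ + m) - y m)
            - η • ∑ j, a j • (F j (w j (k * τ + m)) - F j (y m))‖ := by
          rw [hw.sum_smul_succ hasum, hy m hm, hG]
          simp only [smul_sub, Finset.sum_sub_distrib, smul_comm _ η, ← Finset.smul_sum]
          congr 1
          abel
      _ ≤ ‖∑ j, a j • w j (k * τ + m) - y m‖
            + η * ‖∑ j, a j • (F j (w j (k * τ + m)) - F j (y m))‖ :=
          (norm_sub_le _ _).trans_eq (by rw [norm_smul, Real.norm_of_nonneg hη])
      _ ≤ averageDriftBound β η (∑ j, a j * δ j) m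
            + η * (β * driftBound β η (∑ j, a j * δ j) m) := by
          gcongr
          exact ih (by omega)
      _ = averageDriftBound β η (∑ j, a j * δ j) (m + 1) := by
          rw [averageDriftBound_succ hβ.ne', mul_assoc]

lemma norm_sync_sub_le_averageDriftBound (hw : IsFederatedRun η τ a F w)
    (ha : ∀ j, 0 ≤ a j) (hasum : ∑ j, a j = 1) (hβ : 0 < β) (hη : 0 ≤ η)
    (hF : ∀ j x y, ‖F j x - F j y‖ ≤ β * ‖x - y‖) (hFG : ∀ j x, ‖F j x - G x‖ ≤ δ j)
    (hG : ∀ x, G x = ∑ j, a j • F j x) {i : ι} (h0 : w i (k * τ) = y 0)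
    (hy : IsDescentRun η G y τ) :
    ‖w i ((k + 1) * τ) - y τ‖ ≤ averageDriftBound β η (∑ j, a j * δ j) τ := by
  have h0' (j : ι) : w j (k * τ) = y 0 := (hw.eq_of_dvd (Nat.dvd_mul_left τ k) j i).trans h0
  have havg := hw.norm_sum_smul_sub_le_averageDriftBound ha hasum hβ hη hF hFG hG h0' hy le_rfl
  rwa [← Nat.succ_mul, hw.sum_smul_eq_of_dvd hasum (Nat.dvd_mul_left τ _) i] at havg

end IsFederatedRun

end FederatedRun

section GradientDescent

variable {E : Type*} [NormedAddCommGroup E] [InnerProductSpace ℝ E] [CompleteSpace E]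
  {f : E → ℝ} {β η : ℝ} {z : E}

lemma isSmooth_of_norm_gradient_sub_le (hf : Differentiable ℝ f)
    (hβ : ∀ x y, ‖∇ f x - ∇ f y‖ ≤ β * ‖x - y‖) : IsSmooth β f := by
  refine ⟨hf, fun x y => ?_⟩
  rw [← toDual_gradient, ← toDual_gradient, ← map_sub, LinearIsometryEquiv.norm_map]
  exact hβ x y

lemma sub_le_inner_gradient_of_convexOn (hc : ConvexOn ℝ Set.univ f) {x : E}
    (hf : DifferentiableAt ℝ f x) (y : E) : f x - f y ≤ inner ℝ (∇ f x) (x - y) := by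
  have h := add_fderiv_sub_le_of_convexOn hc (Set.mem_univ x) (Set.mem_univ y) hf
  rw [← inner_gradient_left, ← neg_sub x y, inner_neg_right] at h
  linarith

namespace IsSmooth

lemma gradient_step_le (hf : IsSmooth β f) (η : ℝ) (x : E) :
    f (x - η • ∇ f x) ≤ f x - η * (1 - β * η / 2) * ‖∇ f x‖ ^ 2 := by
  have h := hf.le_add_fderiv_add_sq x (-(η • ∇ f x))
  rw [← sub_eq_add_neg, ← inner_gradient_left, inner_neg_right, real_inner_smul_right,
    real_inner_self_eq_norm_sq, norm_neg, norm_smul, mul_pow, Real.norm_eq_abs, sq_abs] at h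
  linarith

lemma norm_gradient_step_sub_le (hf : IsSmooth β f) (hc : ConvexOn ℝ Set.univ f) (hη : 0 ≤ η)
    (hβη : β * η ≤ 1) {x : E} (hz : f z ≤ f (x - η • ∇ f x)) :
    ‖x - η • ∇ f x - z‖ ≤ ‖x - z‖ := by
  have hinner : η * ‖∇ f x‖ ^ 2 ≤ 2 * inner ℝ (∇ f x) (x - z) := by
    have hstep := hf.gradient_step_le η x
    have hconv := sub_le_inner_gradient_of_convexOn hc (hf.differentiable x) z
    have hhalf : η * (1 / 2) * ‖∇ f x‖ ^ 2 ≤ η * (1 - β * η / 2) * ‖∇ f x‖ ^ 2 := by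
      gcongr
      linarith
    linarith
  refine le_of_sq_le_sq ?_ (norm_nonneg _)
  calc ‖x - η • ∇ f x - z‖ ^ 2
      = ‖x - z‖ ^ 2 - η * (2 * inner ℝ (∇ f x) (x - z) - η * ‖∇ f x‖ ^ 2) := by
        rw [sub_right_comm, norm_sub_sq_real, real_inner_smul_right, real_inner_comm, norm_smul,
          mul_pow, Real.norm_eq_abs, sq_abs]
        ring
    _ ≤ ‖x - z‖ ^ 2 := sub_le_self _ (mul_nonneg hη (sub_nonneg.2 hinner))

lemma inv_gap_add_le_inv_gap_gradient_step (hf : IsSmooth β f) (hc : ConvexOn ℝ Set.univ f)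
    (hη : 0 ≤ η) (hβη : β * η ≤ 1) {x : E} {c : ℝ} (hc0 : 0 ≤ c)
    (hcx : c * ‖x - z‖ ^ 2 ≤ η * (1 - β * η / 2)) (hpos : 0 < f (x - η • ∇ f x) - f z) :
    (f x - f z)⁻¹ + c ≤ (f (x - η • ∇ f x) - f z)⁻¹ := by
  set A := f x - f z
  set B := f (x - η • ∇ f x) - f z
  have hα : 0 ≤ η * (1 - β * η / 2) := mul_nonneg hη (by linarith)
  have hdescent : η * (1 - β * η / 2) * ‖∇ f x‖ ^ 2 ≤ A - B := by
    linarith [hf.gradient_step_le η x]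
  have hBA : B ≤ A := sub_nonneg.1 ((mul_nonneg hα (sq_nonneg _)).trans hdescent)
  have hA : 0 < A := hpos.trans_le hBA
  have hgap : A ≤ ‖∇ f x‖ * ‖x - z‖ :=
    (sub_le_inner_gradient_of_convexOn hc (hf.differentiable x) z).trans (real_inner_le_norm _ _)
  have hcAB : c * (A * B) ≤ A - B :=
    calc c * (A * B) ≤ c * (A * A) := by gcongr
      _ ≤ c * (‖∇ f x‖ * ‖x - z‖) ^ 2 := by rw [← sq]; gcongr
      _ = c * ‖x - z‖ ^ 2 * ‖∇ f x‖ ^ 2 := by ring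
      _ ≤ η * (1 - β * η / 2) * ‖∇ f x‖ ^ 2 := by gcongr
      _ ≤ A - B := hdescent
  have hinv : c ≤ B⁻¹ - A⁻¹ := by
    rwa [inv_sub_inv hpos.ne' hA.ne', mul_comm B, le_div_iff₀ (mul_pos hA hpos)]
  linarith

end IsSmooth

namespace IsDescentRun

variable {x : ℕ → E} {n : ℕ}

lemma apply_le_apply_zero (hx : IsDescentRun η (∇ f) x n) (hf : IsSmooth β f) (hη : 0 ≤ η)
    (hβη : β * η ≤ 1) : f (x n) ≤ f (x 0) := by
  induction n with
  | zero => rfl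
  | succ n ih =>
    have hα : 0 ≤ η * (1 - β * η / 2) := mul_nonneg hη (by linarith)
    rw [hx n n.lt_succ_self]
    exact ((hf.gradient_step_le η _).trans (sub_le_self _ (by positivity))).trans
      (ih (hx.mono n.le_succ))

lemma norm_sub_le_norm_zero_sub (hx : IsDescentRun η (∇ f) x n) (hf : IsSmooth β f)
    (hc : ConvexOn ℝ Set.univ f) (hz : ∀ y, f z ≤ f y) (hη : 0 ≤ η) (hβη : β * η ≤ 1) :
    ‖x n - z‖ ≤ ‖x 0 - z‖ := by
  induction n with
  | zero => rfl
  | succ n ih =>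
    rw [hx n n.lt_succ_self]
    exact (hf.norm_gradient_step_sub_le hc hη hβη (hz _)).trans (ih (hx.mono n.le_succ))

lemma inv_gap_zero_add_le_inv_gap (hx : IsDescentRun η (∇ f) x n) (hf : IsSmooth β f)
    (hc : ConvexOn ℝ Set.univ f) (hz : ∀ y, f z ≤ f y) (hη : 0 ≤ η) (hβη : β * η ≤ 1) {c : ℝ}
    (hc0 : 0 ≤ c) (hcx : c * ‖x 0 - z‖ ^ 2 ≤ η * (1 - β * η / 2)) (hpos : 0 < f (x n) - f z) :
    (f (x 0) - f z)⁻¹ + n * c ≤ (f (x n) - f z)⁻¹ := by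
  induction n with
  | zero => simp
  | succ n ih =>
    have hxn := hx.mono n.le_succ
    have hcxn : c * ‖x n - z‖ ^ 2 ≤ η * (1 - β * η / 2) := by
      refine le_trans ?_ hcx
      gcongr
      exact hxn.norm_sub_le_norm_zero_sub hf hc hz hη hβη
    have hlast : IsDescentRun η (∇ f) (fun m => x (n + m)) 1 := fun m hm => hx (n + m) (by omega)
    have hposn : 0 < f (x n) - f z :=
      hpos.trans_le (sub_le_sub_right (hlast.apply_le_apply_zero hf hη hβη) _)
    rw [hx n n.lt_succ_self] at hpos ⊢
    have hstep := hf.inv_gap_add_le_inv_gap_gradient_step hc hη hβη hc0 hcxn hpos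
    push_cast
    linarith [ih hxn hposn]

end IsDescentRun

end GradientDescent

section RestartedDescent

lemma inv_sub_div_sq_le_inv {A B D ε : ℝ} (hε : 0 < ε) (hA : ε ≤ A) (hB : ε ≤ B) (hD : 0 ≤ D)
    (h : A ≤ B + D) : B⁻¹ - D / ε ^ 2 ≤ A⁻¹ := by
  have hA0 : 0 < A := hε.trans_le hA
  have hB0 : 0 < B := hε.trans_le hB
  suffices B⁻¹ - A⁻¹ ≤ D / ε ^ 2 by linarith
  calc B⁻¹ - A⁻¹ = (A - B) / (B * A) := inv_sub_inv hB0.ne' hA0.ne'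
    _ ≤ D / (B * A) := by gcongr; linarith
    _ ≤ D / ε ^ 2 := by rw [sq]; gcongr

lemma mul_sub_div_sq_le_inv_of_growth_of_jump {A B : ℕ → ℝ} {q D ε : ℝ} {K : ℕ} (hε : 0 < ε)
    (hD : 0 ≤ D) (hA : ∀ k ≤ K, ε ≤ A k) (hB : ∀ k < K, ε ≤ B k)
    (hgrowth : ∀ k < K, (A k)⁻¹ + q ≤ (B k)⁻¹) (hjump : ∀ k < K, A (k + 1) ≤ B k + D) :
    K * (q - D / ε ^ 2) ≤ (A K)⁻¹ := by
  induction K with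
  | zero => simpa using hε.le.trans (hA 0 le_rfl)
  | succ K ih =>
    have ih := ih (fun k hk => hA k (by omega)) (fun k hk => hB k (by omega))
      (fun k hk => hgrowth k (by omega)) (fun k hk => hjump k (by omega))
    have hdrop := inv_sub_div_sq_le_inv hε (hA (K + 1) le_rfl) (hB K K.lt_succ_self) hD
      (hjump K K.lt_succ_self)
    push_cast
    linarith [hgrowth K K.lt_succ_self]

variable {E : Type*} [NormedAddCommGroup E] [InnerProductSpace ℝ E] [CompleteSpace E]

lemma gap_le_of_restarted_gradient_descent {f : E → ℝ} {β η : ℝ} {z : E} (hf : IsSmooth β f)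
    (hc : ConvexOn ℝ Set.univ f) (hz : ∀ y, f z ≤ f y) (hη : 0 ≤ η) (hβη : β * η ≤ 1)
    {u : ℕ → ℕ → E} {τ K r : ℕ} (hu : ∀ k ≤ K, IsDescentRun η (∇ f) (u k) τ) (hr : r ≤ τ)
    {c D ε : ℝ} (hc0 : 0 ≤ c) (hcu : ∀ k ≤ K, c * ‖u k 0 - z‖ ^ 2 ≤ η * (1 - β * η / 2))
    (hD : 0 ≤ D) (hε : 0 < ε) (hjump : ∀ k < K, f (u (k + 1) 0) ≤ f (u k τ) + D)
    (hend : ∀ k < K, ε ≤ f (u k τ) - f z) (hroot : K * D ≤ (K * τ + r) * c * ε ^ 2 - ε) :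
    f (u K r) - f z ≤ ε := by
  by_contra! hlast
  have hrun := (hu K le_rfl).mono hr
  have hstart (k : ℕ) (hk : k ≤ K) : ε ≤ f (u k 0) - f z := by
    rcases hk.eq_or_lt with rfl | hk'
    · linarith [hrun.apply_le_apply_zero hf hη hβη]
    · linarith [hend k hk', (hu k hk).apply_le_apply_zero hf hη hβη]
  have hrounds : K * (τ * c - D / ε ^ 2) ≤ (f (u K 0) - f z)⁻¹ :=
    mul_sub_div_sq_le_inv_of_growth_of_jump (A := fun k => f (u k 0) - f z) hε hD hstart hend
      (fun k hk => (hu k hk.le).inv_gap_zero_add_le_inv_gap hf hc hz hη hβη hc0 (hcu k hk.le)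
        (hε.trans_le (hend k hk)))
      (fun k hk => by linarith [hjump k hk])
  have hfinal := hrun.inv_gap_zero_add_le_inv_gap hf hc hz hη hβη hc0 (hcu K le_rfl)
    (hε.trans hlast)
  have hinv : (f (u K r) - f z)⁻¹ < ε⁻¹ := inv_strictAnti₀ hε hlast
  have htotal : (K * τ + r) * c - K * (D / ε ^ 2) < ε⁻¹ := by linarith
  have hscaled := mul_lt_mul_of_pos_right htotal (pow_pos hε 2)
  have hε_ne := hε.ne'
  field_simp at hscaled
  linarith

end RestartedDescent

lemma pos_and_quadratic_eq_of_eq_root {p C ε : ℝ} (hp : 0 < p) (hC : 0 ≤ C)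
    (hε : ε = 1 / (2 * p) + √(1 / (2 * p) ^ 2 + C / p)) : 0 < ε ∧ p * ε ^ 2 - ε = C := by
  have hsqrt : √(1 / (2 * p) ^ 2 + C / p) = ε - 1 / (2 * p) := by linarith
  have hsq := Real.sq_sqrt (show 0 ≤ 1 / (2 * p) ^ 2 + C / p by positivity)
  refine ⟨by rw [hε]; positivity, mul_left_cancel₀ hp.ne' ?_⟩
  rw [hsqrt] at hsq
  field_simp at hsq
  linarith

lemma inf'_inv_mul_le_one {κ : Type*} {s : Finset κ} (hs : s.Nonempty) {x : κ → ℝ} {k : κ}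
    (hk : k ∈ s) (hx : 0 ≤ x k) : s.inf' hs (fun k => (x k)⁻¹) * x k ≤ 1 :=
  (mul_le_mul_of_nonneg_right (Finset.inf'_le _ hk) hx).trans inv_mul_le_one

section FederatedGap

variable {ι E : Type*} [Fintype ι] [NormedAddCommGroup E] [InnerProductSpace ℝ E] [CompleteSpace E]

theorem IsFederatedRun.gap_le {η : ℝ} {τ : ℕ} {a : ι → ℝ} {F : ι → E → E} {w : ι → ℕ → E}
    (hw : IsFederatedRun η τ a F w) (ha : ∀ j, 0 ≤ a j) (hasum : ∑ j, a j = 1) {β ρ : ℝ}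
    (hβ : 0 < β) (hρ : 0 ≤ ρ) (hη : 0 ≤ η) (hβη : β * η ≤ 1) {f : E → ℝ} {δ : ι → ℝ}
    (hF : ∀ j x y, ‖F j x - F j y‖ ≤ β * ‖x - y‖) (hFf : ∀ j x, ‖F j x - ∇ f x‖ ≤ δ j)
    (hgrad : ∀ x, ∇ f x = ∑ j, a j • F j x) (hf : IsSmooth β f) (hc : ConvexOn ℝ Set.univ f)
    (hlip : ∀ x y, |f x - f y| ≤ ρ * ‖x - y‖) {z : E} (hz : ∀ x, f z ≤ f x) {i : ι}
    {u : ℕ → ℕ → E} {K r : ℕ} (hu : ∀ k ≤ K, IsDescentRun η (∇ f) (u k) τ)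
    (hu0 : ∀ k ≤ K, w i (k * τ) = u k 0) (hr : r < τ) {p c ε : ℝ} (hc0 : 0 ≤ c)
    (hcu : ∀ k ≤ K, c * ‖u k 0 - z‖ ^ 2 ≤ η * (1 - β * η / 2))
    (hp : p = (K * τ + r : ℕ) * c) (hp0 : 0 < p)
    (hε : ε = 1 / (2 * p) + √(1 / (2 * p) ^ 2 +
      ρ * (K * averageDriftBound β η (∑ j, a j * δ j) τ + driftBound β η (δ i) r) / p))
    (hend : ∀ k < K, ε ≤ f (u k τ) - f z) :
    f (w i (K * τ + r)) - f z ≤ ε + ρ * driftBound β η (δ i) r := by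
  have hδ (j : ι) : 0 ≤ δ j := (norm_nonneg _).trans (hFf j z)
  have hg0 : 0 ≤ driftBound β η (δ i) r := driftBound_nonneg hβ hη (hδ i) r
  have hh0 : 0 ≤ averageDriftBound β η (∑ j, a j * δ j) τ :=
    averageDriftBound_nonneg hβ hη (Finset.sum_nonneg fun j _ => mul_nonneg (ha j) (hδ j)) τ
  obtain ⟨hε0, hquad⟩ := pos_and_quadratic_eq_of_eq_root hp0 (by positivity) hε
  have hroot : K * (ρ * averageDriftBound β η (∑ j, a j * δ j) τ)
      ≤ (K * τ + r) * c * ε ^ 2 - ε := by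
    rw [hp] at hquad
    push_cast at hquad
    linarith [mul_nonneg hρ hg0]
  have hloss {x y : E} {B : ℝ} (hxy : ‖x - y‖ ≤ B) : f x ≤ f y + ρ * B := by
    linarith [le_of_abs_le (hlip x y), mul_le_mul_of_nonneg_left hxy hρ]
  have hjump (k : ℕ) (hk : k < K) :
      f (u (k + 1) 0) ≤ f (u k τ) + ρ * averageDriftBound β η (∑ j, a j * δ j) τ := by
    rw [← hu0 (k + 1) hk]
    exact hloss (hw.norm_sync_sub_le_averageDriftBound ha hasum hβ hη hF hFf hgrad
      (hu0 k hk.le) (hu k hk.le))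
  have hcentral : f (u K r) - f z ≤ ε :=
    gap_le_of_restarted_gradient_descent hf hc hz hη hβη hu hr.le hc0 hcu
      (mul_nonneg hρ hh0) hε0 hjump hend hroot
  have hlocal : f (w i (K * τ + r)) ≤ f (u K r) + ρ * driftBound β η (δ i) r :=
    hloss (hw.norm_sub_le_driftBound hβ hη (hF i) (hFf i) (hu0 K le_rfl) (hu K le_rfl) hr)
  linarith

end FederatedGap

theorem stmt_0_general {E ι : Type*} [NormedAddCommGroup E] [InnerProductSpace ℝ E]
    [CompleteSpace E] [Fintype ι]
    (L : ι → E → ℝ) (a : ι → ℝ) (ha : ∀ j, 0 ≤ a j) (hasum : ∑ j, a j = 1)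
    (ρ β : ℝ) (hρ : 0 ≤ ρ) (hβ : 0 < β)
    (hdiff : ∀ j, Differentiable ℝ (L j))
    (hsmooth : ∀ j x y, ‖∇ (L j) x - ∇ (L j) y‖ ≤ β * ‖x - y‖)
    (Lg : E → ℝ) (hLg : ∀ x, Lg x = ∑ j, a j * L j x)
    (hconv : ConvexOn ℝ Set.univ Lg) (hlip : ∀ x y, |Lg x - Lg y| ≤ ρ * ‖x - y‖)
    (wstar : E) (hmin : ∀ x, Lg wstar ≤ Lg x)
    (η : ℝ) (hη : 0 < η) (hηβ : η ≤ 1 / β) (τ : ℕ) (hτ : 1 ≤ τ)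
    (w₀ : E) (w : ι → ℕ → E) (hw0 : ∀ j, w j 0 = w₀)
    (hwlocal : ∀ j s, ¬ (τ ∣ (s + 1)) → w j (s + 1) = w j s - η • ∇ (L j) (w j s))
    (hwagg : ∀ j s, τ ∣ (s + 1) → w j (s + 1) = ∑ l, a l • (w l s - η • ∇ (L l) (w l s)))
    (i : ι) (t : ℕ) (ht : 1 ≤ t) (K : ℕ) (hK : K = t / τ)
    (v : ℕ → ℕ → E) (hvinit : ∀ k, 1 ≤ k → v k ((k - 1) * τ) = w i ((k - 1) * τ))
    (hvstep : ∀ k s, 1 ≤ k → (k - 1) * τ ≤ s → s < k * τ →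
      v k (s + 1) = v k s - η • ∇ Lg (v k s))
    (hvne : ∀ k, 1 ≤ k → k ≤ K + 1 → v k ((k - 1) * τ) ≠ wstar)
    (δ : ι → ℝ) (hδ : ∀ j x, ‖∇ (L j) x - ∇ Lg x‖ ≤ δ j)
    (δbar : ℝ) (hδbar : δbar = ∑ j, a j * δ j)
    (g : ι → ℕ → ℝ) (hg : ∀ j x, g j x = (δ j / β) * ((η * β + 1) ^ x - 1))
    (h : ℕ → ℝ) (hh : ∀ x, h x = (δbar / β) * ((η * β + 1) ^ x - 1) - η * δbar * x)
    (ω : ℝ) (hω : ω = (Finset.Icc 1 (K + 1)).inf' (Finset.nonempty_Icc.mpr (by omega))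
      (fun k => (‖v k ((k - 1) * τ) - wstar‖ ^ 2)⁻¹))
    (ε₀ : ℝ) (hε₀ : ε₀ = 1 / ((t : ℝ) * ω * η * (2 - β * η))
      + √(1 / ((t : ℝ) ^ 2 * ω ^ 2 * η ^ 2 * (2 - β * η) ^ 2)
        + ρ * ((K : ℝ) * h τ + g i (t - K * τ)) / ((t : ℝ) * ω * η * (1 - β * η / 2))))
    (hgap : ∀ k, 1 ≤ k → k ≤ K → ε₀ ≤ Lg (v k (k * τ)) - Lg wstar) :
    Lg (w i t) - Lg wstar ≤ ε₀ + ρ * g i (t - K * τ) := by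
  obtain rfl : g = fun j => driftBound β η (δ j) := funext₂ hg
  obtain rfl : h = averageDriftBound β η δbar := funext hh
  subst hδbar
  have hLg_smooth : IsSmooth β Lg := funext hLg ▸ isSmooth_weighted_sum (fun j _ => ha j) hasum
    fun j _ => isSmooth_of_norm_gradient_sub_le (hdiff j) (hsmooth j)
  have hLg_gradient (x : E) : ∇ Lg x = ∑ j, a j • ∇ (L j) x :=
    funext hLg ▸ gradient_weighted_sum fun j _ => hdiff j x
  have hw : IsFederatedRun η τ a (fun j => ∇ (L j)) w :=
    ⟨fun i j => (hw0 i).trans (hw0 j).symm, hwlocal, hwagg⟩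
  have hrun (k : ℕ) : IsDescentRun η (∇ Lg) (fun m => v (k + 1) (k * τ + m)) τ := fun m hm =>
    hvstep (k + 1) (k * τ + m) (by omega) (by simp) (by rw [Nat.succ_mul]; omega)
  have hβη : β * η ≤ 1 := by rwa [le_div_iff₀' hβ] at hηβ
  have hα : 0 < η * (1 - β * η / 2) := mul_pos hη (by linarith)
  have hdist (k : ℕ) (hk : k ∈ Finset.Icc 1 (K + 1)) : 0 < ‖v k ((k - 1) * τ) - wstar‖ ^ 2 := by
    rw [Finset.mem_Icc] at hk
    exact pow_pos (norm_sub_pos_iff.2 (hvne k hk.1 hk.2)) 2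
  have hω0 : 0 < ω := hω ▸ (Finset.lt_inf'_iff _).2 fun k hk => inv_pos.2 (hdist k hk)
  have hωu (k : ℕ) (hk : k ≤ K) :
      ω * (η * (1 - β * η / 2)) * ‖v (k + 1) (k * τ) - wstar‖ ^ 2 ≤ η * (1 - β * η / 2) := by
    have hmem : k + 1 ∈ Finset.Icc 1 (K + 1) := Finset.mem_Icc.2 ⟨by omega, by omega⟩
    rw [mul_right_comm, hω]
    exact mul_le_of_le_one_left hα.le (inf'_inv_mul_le_one _ hmem (hdist _ hmem).le)
  obtain ⟨r, hr, rfl⟩ : ∃ r < τ, t = K * τ + r :=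
    ⟨t % τ, Nat.mod_lt t hτ, hK ▸ (Nat.div_add_mod' t τ).symm⟩
  rw [Nat.add_sub_cancel_left] at hε₀ ⊢
  have hT : (0 : ℝ) < (K * τ + r : ℕ) := mod_cast ht
  have hp0 : 0 < (K * τ + r : ℕ) * ω * η * (1 - β * η / 2) :=
    mul_pos (mul_pos (mul_pos hT hω0) hη) (by linarith)
  have hroot_denom : 2 * ((K * τ + r : ℕ) * ω * η * (1 - β * η / 2))
      = (K * τ + r : ℕ) * ω * η * (2 - β * η) := by ring
  exact hw.gap_le ha hasum hβ hρ hη.le hβη hsmooth hδ hLg_gradient hLg_smooth hconv hlip hmin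
    (fun k _ => hrun k) (fun k _ => (hvinit (k + 1) (by omega)).symm) hr (by positivity)
    hωu (by ring) hp0 (by rw [hroot_denom]; simpa only [mul_pow] using hε₀)
    fun k hk => by simpa only [Nat.succ_mul] using hgap (k + 1) (by omega) hk

/-- **Upper bound on the local loss in federated learning (Theorem 1).**
With `N` devices running federated gradient descent (local steps with period-`τ`
weighted aggregation) on convex, `ρ`-Lipschitz, `β`-smooth local losses `L j`,
global loss `Lg = ∑ j, a j • L j` minimized at `w*`, step size `0 < η ≤ 1/β`,
auxiliary centralized iterates `v k` restarted from the synchronized value at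
each aggregation, gradient divergences `δ j`, and `ε₀` the positive root of the
stated quadratic, if `Lg (v k (kτ)) − Lg w* ≥ ε₀` for `k = 1,…,K` and
`k ↦ Lg (v k (kτ))` is non-increasing, then
`Lg (w i t) − Lg w* ≤ ε₀ + ρ g_i (t − Kτ)`. -/
theorem stmt_0 (d N : ℕ) (hN : 1 ≤ N)
    (L : Fin N → EuclideanSpace ℝ (Fin d) → ℝ)
    (a : Fin N → ℝ) (ha : ∀ j, 0 ≤ a j) (hasum : ∑ j, a j = 1)
    (ρ β : ℝ) (hρ : 0 ≤ ρ) (hβ : 0 < β)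
    (hconv : ∀ j, ConvexOn ℝ Set.univ (L j))
    (hlip : ∀ j x y, |L j x - L j y| ≤ ρ * ‖x - y‖)
    (hdiff : ∀ j, Differentiable ℝ (L j))
    (hsmooth : ∀ j x y, ‖gradient (L j) x - gradient (L j) y‖ ≤ β * ‖x - y‖)
    (Lg : EuclideanSpace ℝ (Fin d) → ℝ)
    (hLg : ∀ x, Lg x = ∑ j, a j * L j x)
    (wstar : EuclideanSpace ℝ (Fin d)) (hmin : ∀ x, Lg wstar ≤ Lg x)
    (η : ℝ) (hη : 0 < η) (hηβ : η ≤ 1 / β)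
    (τ : ℕ) (hτ : 1 ≤ τ)
    -- federated iterates
    (w₀ : EuclideanSpace ℝ (Fin d))
    (w : Fin N → ℕ → EuclideanSpace ℝ (Fin d))
    (hw0 : ∀ j, w j 0 = w₀)
    (hwlocal : ∀ j s, ¬ (τ ∣ (s + 1)) →
      w j (s + 1) = w j s - η • gradient (L j) (w j s))
    (hwagg : ∀ j s, τ ∣ (s + 1) →
      w j (s + 1) = ∑ l, a l • (w l s - η • gradient (L l) (w l s)))
    -- the fixed device and time
    (i : Fin N) (t : ℕ) (ht : 1 ≤ t)
    (K : ℕ) (hK : K = t / τ)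
    -- auxiliary centralized iterates, restarted from the synchronized value
    (v : ℕ → ℕ → EuclideanSpace ℝ (Fin d))
    (hvinit : ∀ k, 1 ≤ k → v k ((k - 1) * τ) = w i ((k - 1) * τ))
    (hvstep : ∀ k s, 1 ≤ k → (k - 1) * τ ≤ s → s < k * τ →
      v k (s + 1) = v k s - η • gradient Lg (v k s))
    (hvne : ∀ k, 1 ≤ k → k ≤ K + 1 → v k ((k - 1) * τ) ≠ wstar)
    -- gradient divergence constants and the functions g, h
    (δ : Fin N → ℝ) (hδ : ∀ j x, ‖gradient (L j) x - gradient Lg x‖ ≤ δ j)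
    (δbar : ℝ) (hδbar : δbar = ∑ j, a j * δ j)
    (g : Fin N → ℕ → ℝ)
    (hg : ∀ j x, g j x = (δ j / β) * ((η * β + 1) ^ x - 1))
    (h : ℕ → ℝ)
    (hh : ∀ x, h x = (δbar / β) * ((η * β + 1) ^ x - 1) - η * δbar * x)
    -- ω and ε₀
    (ω : ℝ)
    (hω : ω = (Finset.Icc 1 (K + 1)).inf'
        (Finset.nonempty_Icc.mpr (by omega))
        (fun k => (‖v k ((k - 1) * τ) - wstar‖ ^ 2)⁻¹))
    (ε₀ : ℝ)
    (hε₀ : ε₀ = 1 / ((t : ℝ) * ω * η * (2 - β * η))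
        + Real.sqrt (1 / ((t : ℝ) ^ 2 * ω ^ 2 * η ^ 2 * (2 - β * η) ^ 2)
            + ρ * ((K : ℝ) * h τ + g i (t - K * τ))
              / ((t : ℝ) * ω * η * (1 - β * η / 2))))
    -- the two assumptions on the centralized iterates
    (hgap : ∀ k, 1 ≤ k → k ≤ K → ε₀ ≤ Lg (v k (k * τ)) - Lg wstar)
    (hmono : ∀ k₁ k₂, 1 ≤ k₁ → k₁ ≤ k₂ →
      Lg (v k₂ (k₂ * τ)) ≤ Lg (v k₁ (k₁ * τ))) :
    Lg (w i t) - Lg wstar ≤ ε₀ + ρ * g i (t - K * τ) := by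
  obtain rfl : Lg = fun x => ∑ j, a j * L j x := funext hLg
  exact stmt_0_general L a ha hasum ρ β hρ hβ hdiff hsmooth _ hLg
    (convexOn_weighted_sum convex_univ (fun j _ => ha j) fun j _ => hconv j)
    (fun x y => abs_weighted_sum_sub_le (fun j _ => ha j) hasum fun j _ => hlip j x y)
    wstar hmin η hη hηβ τ hτ w₀ w hw0 hwlocal hwagg i t ht K hK v hvinit hvstep hvne δ hδ δbar
    hδbar g hg h hh ω hω ε₀ hε₀ hgap
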